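/- arXiv:1508.07613 — 3 statements merged into one kernel-verified Lean document; each statement's English description precedes it below -/
import Mathlib

section
/- Let α ∈ (0,1/2) and let ω : ℝ×(0,∞) → ℝ be measurable, odd in x1, and satisfy 0 ≤ ω ≤ 1 on D⁺. Then for every x = (x1,x2) in the closure of D⁺ with x2 ≤ x1, one has −∫_{(0,∞)×(0,x2)} K1(x,y) ω(y) dy ≤ (1/α)·(1/(1−2α) − 2^{−α})·x1^{1−2α}. -/
open MeasureTheory

noncomputable section

/-- Euclidean distance between points of `ℝ²` written as pairs. -/
def edist2 (p q : ℝ × ℝ) : ℝ := Real.sqrt ((p.1 - q.1) ^ 2 + (p.2 - q.2) ^ 2)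

/-- The open quadrant `D⁺ = (0,∞) × (0,∞)`. -/
def Dplus : Set (ℝ × ℝ) := Set.Ioi 0 ×ˢ Set.Ioi 0

/-- `K1(x,y) = (y₂-x₂)/|x-y|^{2+2α} - (y₂-x₂)/|x-ỹ|^{2+2α}
  - (y₂+x₂)/|x+y|^{2+2α} + (y₂+x₂)/|x-ȳ|^{2+2α}`, where `ỹ = (-y₁,y₂)`, `ȳ = (y₁,-y₂)`. -/
def K1 (α : ℝ) (x y : ℝ × ℝ) : ℝ :=
  (y.2 - x.2) / edist2 x y ^ (2 + 2 * α)
  - (y.2 - x.2) / edist2 x (-y.1, y.2) ^ (2 + 2 * α)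
  - (y.2 + x.2) / edist2 x (-y.1, -y.2) ^ (2 + 2 * α)
  + (y.2 + x.2) / edist2 x (y.1, -y.2) ^ (2 + 2 * α)

/-- `K2(x,y) = (y₁-x₁)/|x-y|^{2+2α} + (y₁+x₁)/|x-ỹ|^{2+2α}
  - (y₁+x₁)/|x+y|^{2+2α} - (y₁-x₁)/|x-ȳ|^{2+2α}`, where `ỹ = (-y₁,y₂)`, `ȳ = (y₁,-y₂)`. -/
def K2 (α : ℝ) (x y : ℝ × ℝ) : ℝ :=
  (y.1 - x.1) / edist2 x y ^ (2 + 2 * α)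
  + (y.1 + x.1) / edist2 x (-y.1, y.2) ^ (2 + 2 * α)
  - (y.1 + x.1) / edist2 x (-y.1, -y.2) ^ (2 + 2 * α)
  - (y.1 - x.1) / edist2 x (y.1, -y.2) ^ (2 + 2 * α)

/-!
With `k(s, t) = s / (t² + s²)^(1+α)`, the kernel `-K1 x y` is the difference of
`k(s, x₁ - y₁) - k(s, x₁ + y₁)` at `s = x₂ - y₂` and at `s = x₂ + y₂`. Both are nonnegative, so for
`0 ≤ ω ≤ 1` the second may be dropped and `ω` replaced by `1`. Integrating `k` over `0 < s < x₂`
gives `G(t) = ((t²)^(-α) - (t² + x₂²)^(-α)) / (2α)`, which is even in `t` and decreasing in `|t|`.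
In `∫ y in 0..∞, G(x₁ - y) - G(x₁ + y)` the tails of `G` cancel, so that at most the integral of `G`
over `(-x₁, x₁)` is left; there `(t² + x₂²)^(-α) / α` is smallest at `t = x₁`.
-/

open Set Filter

section ProdSnd

variable {X Y Z E : Type*} [MeasurableSpace X] [MeasurableSpace Y] [MeasurableSpace Z]
  [NormedAddCommGroup E] {μ : Measure X} {ν : Measure Y} {ρ : Measure Z} [SFinite μ] [SFinite ν]
  {e : Y → Z}

lemma integrableOn_prod_comp_snd_iff (he : MeasurePreserving e ν ρ) (hemb : MeasurableEmbedding e)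
    {f : X × Z → E} {s : Set X} {t : Set Z} :
    IntegrableOn (fun p : X × Y => f (p.1, e p.2)) (s ×ˢ (e ⁻¹' t)) (μ.prod ν) ↔
      IntegrableOn f (s ×ˢ t) (μ.prod ρ) :=
  ((MeasurePreserving.id μ).prod he).integrableOn_comp_preimage
    (MeasurableEmbedding.id.prodMap hemb) (f := f) (s := s ×ˢ t)

lemma setIntegral_prod_comp_snd (he : MeasurePreserving e ν ρ) (hemb : MeasurableEmbedding e)
    [NormedSpace ℝ E] (f : X × Z → E) (s : Set X) (t : Set Z) :
    ∫ p in s ×ˢ (e ⁻¹' t), f (p.1, e p.2) ∂μ.prod ν = ∫ p in s ×ˢ t, f p ∂μ.prod ρ :=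
  ((MeasurePreserving.id μ).prod he).setIntegral_preimage_emb (MeasurableEmbedding.id.prodMap hemb)
    f (s ×ˢ t)

end ProdSnd

section Reflection

variable {h : ℝ → ℝ} {a y : ℝ}

/-- The half-line kernel obtained from `h` by the method of images: the contribution at `a` of a
source at `y`, minus that of its mirror image `-y`. -/
def mirrorDiff (h : ℝ → ℝ) (a y : ℝ) : ℝ := h (a - y) - h (a + y)

lemma apply_abs_of_even (heven : Function.Even h) (t : ℝ) : h |t| = h t := by
  rcases abs_choice t with ht | ht <;> simp only [ht, heven t]

lemma mirrorDiff_nonneg {S : Set ℝ} (heven : Function.Even h) (hanti : AntitoneOn h S)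
    (ha : 0 ≤ a) (hy : 0 ≤ y) (hsub : |a - y| ∈ S) (hadd : a + y ∈ S) :
    0 ≤ mirrorDiff h a y := by
  rw [mirrorDiff, sub_nonneg, ← apply_abs_of_even heven (a - y)]
  exact hanti hsub hadd (abs_le.2 ⟨by linarith, by linarith⟩)

lemma intervalIntegrable_comp_const_sub (hint : ∀ u v, IntervalIntegrable h volume u v)
    (a u v : ℝ) : IntervalIntegrable (fun y => h (a - y)) volume u v := by
  simpa using (hint (a - u) (a - v)).comp_sub_left a

lemma intervalIntegrable_comp_const_add (hint : ∀ u v, IntervalIntegrable h volume u v)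
    (a u v : ℝ) : IntervalIntegrable (fun y => h (a + y)) volume u v := by
  simpa using (hint (a + u) (a + v)).comp_add_left a

lemma integral_neg_self_of_even (heven : Function.Even h)
    (hint : ∀ u v, IntervalIntegrable h volume u v) (a : ℝ) :
    ∫ t in -a..a, h t = 2 * ∫ t in 0..a, h t := by
  have hneg : ∫ t in -a..0, h t = ∫ t in 0..a, h t := by
    simpa [heven _] using (intervalIntegral.integral_comp_neg (a := 0) (b := a) h).symm
  rw [← intervalIntegral.integral_add_adjacent_intervals (hint (-a) 0) (hint 0 a), hneg, two_mul]

lemma integral_mirrorDiff (heven : Function.Even h)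
    (hint : ∀ u v, IntervalIntegrable h volume u v) (a M : ℝ) :
    ∫ y in 0..M, mirrorDiff h a y = 2 * (∫ t in 0..a, h t) - ∫ t in (M - a)..(M + a), h t := by
  have hsub : ∫ y in 0..M, h (a - y) = ∫ t in -a..(M - a), h t := by
    simp_rw [← heven (a - _), neg_sub]
    simp
  have hadd : ∫ y in 0..M, h (a + y) = ∫ t in a..(M + a), h t := by
    simp [add_comm]
  simp only [mirrorDiff]
  rw [intervalIntegral.integral_sub (intervalIntegrable_comp_const_sub hint _ _ _)
    (intervalIntegrable_comp_const_add hint _ _ _), hsub, hadd,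
    intervalIntegral.integral_interval_sub_interval_comm (hint _ _) (hint _ _) (hint _ _),
    integral_neg_self_of_even heven hint]

lemma integral_mirrorDiff_le (heven : Function.Even h)
    (hint : ∀ u v, IntervalIntegrable h volume u v) (hnonneg : ∀ t, 0 < t → 0 ≤ h t)
    (ha : 0 ≤ a) {M : ℝ} (hM : a < M) :
    ∫ y in 0..M, mirrorDiff h a y ≤ 2 * ∫ t in 0..a, h t := by
  have htail : 0 ≤ ∫ t in (M - a)..(M + a), h t :=
    intervalIntegral.integral_nonneg (by linarith) fun t ht => hnonneg t (by linarith [ht.1])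
  rw [integral_mirrorDiff heven hint]
  linarith

lemma mirrorDiff_nonneg_ae (heven : Function.Even h) (hanti : AntitoneOn h (Ioi 0)) (ha : 0 ≤ a) :
    ∀ᵐ y ∂volume.restrict (Ioi 0), 0 ≤ mirrorDiff h a y := by
  filter_upwards [ae_restrict_mem measurableSet_Ioi, Measure.ae_ne _ a] with y (hy : 0 < y) hya
  exact mirrorDiff_nonneg heven hanti ha hy.le (abs_pos.2 (sub_ne_zero.2 hya.symm))
    (mem_Ioi.2 (by linarith))

lemma integrableOn_mirrorDiff (heven : Function.Even h)
    (hint : ∀ u v, IntervalIntegrable h volume u v) (hnonneg : ∀ t, 0 < t → 0 ≤ h t)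
    (hanti : AntitoneOn h (Ioi 0)) (ha : 0 ≤ a) : IntegrableOn (mirrorDiff h a) (Ioi 0) := by
  refine integrableOn_Ioi_of_intervalIntegral_norm_bounded (2 * ∫ t in 0..a, h t) 0
    (fun M => ?_) tendsto_id ?_
  · exact ((intervalIntegrable_comp_const_sub hint a 0 M).sub
      (intervalIntegrable_comp_const_add hint a 0 M)).1
  · filter_upwards [eventually_gt_atTop a] with M hM
    refine le_of_eq_of_le (intervalIntegral.integral_congr_ae_restrict ?_)
      (integral_mirrorDiff_le heven hint hnonneg ha hM)
    rw [id_eq, uIoc_of_le (ha.trans hM.le)]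
    filter_upwards [ae_restrict_of_ae_restrict_of_subset Ioc_subset_Ioi_self
      (mirrorDiff_nonneg_ae heven hanti ha)] with y hy using Real.norm_of_nonneg hy

lemma setIntegral_mirrorDiff_le (heven : Function.Even h)
    (hint : ∀ u v, IntervalIntegrable h volume u v) (hnonneg : ∀ t, 0 < t → 0 ≤ h t)
    (hanti : AntitoneOn h (Ioi 0)) (ha : 0 ≤ a) :
    ∫ y in Ioi 0, mirrorDiff h a y ≤ 2 * ∫ t in 0..a, h t := by
  refine le_of_tendsto (intervalIntegral_tendsto_integral_Ioi 0
    (integrableOn_mirrorDiff heven hint hnonneg hanti ha) tendsto_id) ?_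
  filter_upwards [eventually_gt_atTop a] with M hM
    using integral_mirrorDiff_le heven hint hnonneg ha hM

end Reflection

section HalfKernel

variable {α a b s t y : ℝ}

/-- The kernel `s / |(t, s)|^(2 + 2α)`, of which `K1` is a signed sum over the mirror images of
`y`. -/
def halfKernel (α s t : ℝ) : ℝ := s / (t ^ 2 + s ^ 2) ^ (1 + α)

lemma halfKernel_nonneg (hs : 0 ≤ s) (t : ℝ) : 0 ≤ halfKernel α s t :=
  div_nonneg hs (Real.rpow_nonneg (by positivity) _)

lemma even_halfKernel (α s : ℝ) : Function.Even (halfKernel α s) := fun t => by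
  simp only [halfKernel, neg_sq]

lemma antitoneOn_halfKernel (hα : -1 ≤ α) (hs : 0 < s) :
    AntitoneOn (halfKernel α s) (Ici 0) := by
  intro t (ht : 0 ≤ t) u _ htu
  have hpos : 0 < t ^ 2 + s ^ 2 := by positivity
  have hexp : 0 ≤ 1 + α := by linarith
  exact div_le_div_of_nonneg_left hs.le (Real.rpow_pos_of_pos hpos _) (by gcongr)

lemma mirrorDiff_halfKernel_nonneg (hα : -1 ≤ α) (hs : 0 < s) (ha : 0 ≤ a) (hy : 0 ≤ y) :
    0 ≤ mirrorDiff (halfKernel α s) a y :=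
  mirrorDiff_nonneg (even_halfKernel α s) (antitoneOn_halfKernel hα hs) ha hy
    (mem_Ici.2 (abs_nonneg _)) (add_nonneg ha hy)

lemma measurable_mirrorDiff_halfKernel (α a : ℝ) :
    Measurable fun p : ℝ × ℝ => mirrorDiff (halfKernel α p.2) a p.1 := by
  unfold mirrorDiff halfKernel
  fun_prop

lemma continuous_halfKernel_left (α : ℝ) (ht : t ≠ 0) : Continuous fun s => halfKernel α s t := by
  have hpos : ∀ s : ℝ, 0 < t ^ 2 + s ^ 2 := fun s => by positivity
  refine Continuous.div continuous_id ?_ fun s => (Real.rpow_pos_of_pos (hpos s) _).ne'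
  exact Continuous.rpow_const (by fun_prop) fun s => Or.inl (hpos s).ne'

/-- The integral of `halfKernel α · t` over `(0, b)` in closed form, for `α ≠ 0` and `t ≠ 0`. -/
def halfKernelIntegral (α b t : ℝ) : ℝ := ((t ^ 2) ^ (-α) - (t ^ 2 + b ^ 2) ^ (-α)) / (2 * α)

lemma integral_halfKernel (hα : α ≠ 0) (b : ℝ) (ht : t ≠ 0) :
    ∫ s in 0..b, halfKernel α s t = halfKernelIntegral α b t := by
  have hpos : ∀ s : ℝ, 0 < t ^ 2 + s ^ 2 := fun s => by positivity
  have hderiv : ∀ s, HasDerivAt (fun s => -(t ^ 2 + s ^ 2) ^ (-α) / (2 * α))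
      (halfKernel α s t) s := by
    intro s
    have hsq : HasDerivAt (fun s : ℝ => t ^ 2 + s ^ 2) (2 * s) s := by
      simpa using (hasDerivAt_pow 2 s).const_add (t ^ 2)
    refine ((hsq.rpow_const (p := -α) (Or.inl (hpos s).ne')).neg.div_const (2 * α)).congr_deriv ?_
    rw [halfKernel, show -α - 1 = -(1 + α) by ring, Real.rpow_neg (hpos s).le]
    field_simp
  rw [intervalIntegral.integral_eq_sub_of_hasDerivAt (fun s _ => hderiv s)
    ((continuous_halfKernel_left α ht).intervalIntegrable _ _), halfKernelIntegral]
  ring_nf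

lemma even_halfKernelIntegral (α b : ℝ) : Function.Even (halfKernelIntegral α b) := fun t => by
  simp only [halfKernelIntegral, neg_sq]

lemma halfKernelIntegral_nonneg (hα : α ≠ 0) (hb : 0 ≤ b) (ht : t ≠ 0) :
    0 ≤ halfKernelIntegral α b t := by
  rw [← integral_halfKernel hα b ht]
  exact intervalIntegral.integral_nonneg hb fun s hs => halfKernel_nonneg hs.1 t

lemma antitoneOn_halfKernelIntegral (hα1 : -1 ≤ α) (hα0 : α ≠ 0) (hb : 0 ≤ b) :
    AntitoneOn (halfKernelIntegral α b) (Ioi 0) := by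
  intro t (ht : 0 < t) u (hu : 0 < u) htu
  rw [← integral_halfKernel hα0 b ht.ne', ← integral_halfKernel hα0 b hu.ne']
  exact intervalIntegral.integral_mono_on_of_le_Ioo hb
    ((continuous_halfKernel_left α hu.ne').intervalIntegrable _ _)
    ((continuous_halfKernel_left α ht.ne').intervalIntegrable _ _)
    fun s hs => antitoneOn_halfKernel hα1 hs.1 ht.le hu.le htu

lemma sq_rpow_neg (α : ℝ) (ht : 0 ≤ t) : (t ^ 2) ^ (-α) = t ^ (-2 * α) := by
  rw [← Real.rpow_natCast_mul ht]
  congr 1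
  push_cast
  ring

lemma intervalIntegrable_sq_rpow_neg (hα : α < 1 / 2) (u v : ℝ) :
    IntervalIntegrable (fun t : ℝ => (t ^ 2) ^ (-α)) volume u v := by
  refine intervalIntegrable_of_even (fun t => by rw [neg_sq]) fun v hv => ?_
  have hrpow : IntervalIntegrable (fun t : ℝ => t ^ (-2 * α)) volume 0 v :=
    intervalIntegral.intervalIntegrable_rpow' (by linarith)
  refine hrpow.congr fun t ht => ?_
  exact (sq_rpow_neg α (uIoc_of_le hv.le ▸ ht).1.le).symm

lemma integral_sq_rpow_neg (hα : α < 1 / 2) (ha : 0 ≤ a) :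
    ∫ t in 0..a, (t ^ 2) ^ (-α) = a ^ (1 - 2 * α) / (1 - 2 * α) := by
  have hcongr : EqOn (fun t : ℝ => (t ^ 2) ^ (-α)) (fun t => t ^ (-2 * α)) (uIcc 0 a) :=
    fun t ht => sq_rpow_neg α (uIcc_of_le ha ▸ ht).1
  rw [intervalIntegral.integral_congr hcongr, integral_rpow (Or.inl (by linarith)),
    show -2 * α + 1 = 1 - 2 * α by ring, Real.zero_rpow (by linarith), sub_zero]

lemma intervalIntegrable_halfKernelIntegral (hα : α < 1 / 2) (b u v : ℝ) :
    IntervalIntegrable (halfKernelIntegral α b) volume u v := by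
  refine ((intervalIntegrable_sq_rpow_neg hα u v).sub ?_).div_const (2 * α)
  rcases eq_or_ne b 0 with rfl | hb
  · simpa using intervalIntegrable_sq_rpow_neg hα u v
  · refine Continuous.intervalIntegrable ?_ u v
    exact Continuous.rpow_const (by fun_prop) fun t => Or.inl (by positivity)

lemma antitoneOn_rpow_neg_div (α : ℝ) : AntitoneOn (fun u : ℝ => u ^ (-α) / α) (Ioi 0) := by
  intro u hu v _ huv
  rcases le_or_gt 0 α with hα | hα
  · exact div_le_div_of_nonneg_right
      (Real.rpow_le_rpow_of_nonpos hu huv (neg_nonpos.2 hα)) hα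
  · exact div_le_div_of_nonpos_of_le hα.le
      (Real.rpow_le_rpow (le_of_lt hu) huv (neg_nonneg.2 hα.le))

lemma halfKernelIntegral_le (b : ℝ) (ht : t ∈ Ioo 0 a) :
    halfKernelIntegral α b t ≤ ((t ^ 2) ^ (-α) - (a ^ 2 + b ^ 2) ^ (-α)) / (2 * α) := by
  have hpos : 0 < t ^ 2 + b ^ 2 := by have := ht.1; positivity
  have hle : t ^ 2 + b ^ 2 ≤ a ^ 2 + b ^ 2 := by
    gcongr
    exacts [ht.1.le, ht.2.le]
  have hanti := antitoneOn_rpow_neg_div α hpos (hpos.trans_le hle) hle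
  rw [halfKernelIntegral]
  simp only [sub_div, mul_comm 2 α, ← div_div] at hanti ⊢
  linarith

lemma two_mul_integral_halfKernelIntegral_le (hα : α < 1 / 2) (ha : 0 ≤ a) (b : ℝ) :
    2 * ∫ t in 0..a, halfKernelIntegral α b t ≤
      1 / α * (a ^ (1 - 2 * α) / (1 - 2 * α) - a * (a ^ 2 + b ^ 2) ^ (-α)) := by
  have hsq := intervalIntegrable_sq_rpow_neg hα 0 a
  calc 2 * ∫ t in 0..a, halfKernelIntegral α b t
      ≤ 2 * ∫ t in 0..a, ((t ^ 2) ^ (-α) - (a ^ 2 + b ^ 2) ^ (-α)) / (2 * α) := by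
        gcongr
        exact intervalIntegral.integral_mono_on_of_le_Ioo ha
          (intervalIntegrable_halfKernelIntegral hα b 0 a)
          ((hsq.sub intervalIntegrable_const).div_const _) fun t => halfKernelIntegral_le b
    _ = 1 / α * (a ^ (1 - 2 * α) / (1 - 2 * α) - a * (a ^ 2 + b ^ 2) ^ (-α)) := by
        rw [intervalIntegral.integral_div, intervalIntegral.integral_sub hsq
          intervalIntegrable_const, integral_sq_rpow_neg hα ha, intervalIntegral.integral_const,
          smul_eq_mul, sub_zero]
        ring

lemma integral_mirrorDiff_halfKernel (hα : α ≠ 0) (hb : 0 ≤ b) (hsub : a - y ≠ 0)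
    (hadd : a + y ≠ 0) :
    ∫ s in Ioo 0 b, mirrorDiff (halfKernel α s) a y = mirrorDiff (halfKernelIntegral α b) a y := by
  rw [← integral_Ioc_eq_integral_Ioo, ← intervalIntegral.integral_of_le hb]
  simp only [mirrorDiff]
  rw [intervalIntegral.integral_sub
    ((continuous_halfKernel_left α hsub).intervalIntegrable _ _)
    ((continuous_halfKernel_left α hadd).intervalIntegrable _ _),
    integral_halfKernel hα b hsub, integral_halfKernel hα b hadd]

end HalfKernel

section Strip

variable {α a b : ℝ}

lemma integral_mirrorDiff_halfKernel_ae_eq (hα : α ≠ 0) (ha : 0 ≤ a) (hb : 0 ≤ b) :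
    (fun y => ∫ s in Ioo 0 b, mirrorDiff (halfKernel α s) a y)
      =ᵐ[volume.restrict (Ioi 0)] mirrorDiff (halfKernelIntegral α b) a := by
  filter_upwards [ae_restrict_mem measurableSet_Ioi, Measure.ae_ne _ a] with y (hy : 0 < y) hya
  exact integral_mirrorDiff_halfKernel hα hb (sub_ne_zero.2 hya.symm) (by positivity)

lemma integrableOn_mirrorDiff_halfKernel (hα : α ∈ Ico (-1) (1 / 2)) (hα0 : α ≠ 0) (ha : 0 ≤ a)
    (hb : 0 ≤ b) :
    IntegrableOn (fun p : ℝ × ℝ => mirrorDiff (halfKernel α p.2) a p.1)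
      (Ioi 0 ×ˢ Ioo 0 b) := by
  rw [IntegrableOn, Measure.volume_eq_prod, ← Measure.prod_restrict, integrable_prod_iff
    (measurable_mirrorDiff_halfKernel α a).aestronglyMeasurable]
  constructor
  · filter_upwards [ae_restrict_mem measurableSet_Ioi, Measure.ae_ne _ a] with y (hy : 0 < y) hya
    have hcont : Continuous fun s => mirrorDiff (halfKernel α s) a y :=
      (continuous_halfKernel_left α (sub_ne_zero.2 hya.symm)).sub
        (continuous_halfKernel_left α (by positivity))
    exact hcont.integrableOn_Icc.mono_set Ioo_subset_Icc_self
  · refine (integrableOn_mirrorDiff (even_halfKernelIntegral α b)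
      (intervalIntegrable_halfKernelIntegral hα.2 b)
      (fun t ht => halfKernelIntegral_nonneg hα0 hb ht.ne')
      (antitoneOn_halfKernelIntegral hα.1 hα0 hb) ha).congr ?_
    filter_upwards [ae_restrict_mem measurableSet_Ioi,
      integral_mirrorDiff_halfKernel_ae_eq hα0 ha hb] with y (hy : 0 < y) hyint
    rw [← hyint]
    exact setIntegral_congr_fun measurableSet_Ioo fun s hs =>
      (Real.norm_of_nonneg (mirrorDiff_halfKernel_nonneg hα.1 hs.1 ha hy.le)).symm

lemma setIntegral_mirrorDiff_halfKernel_le (hα : α ∈ Ico (-1) (1 / 2)) (hα0 : α ≠ 0)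
    (ha : 0 ≤ a) (hb : 0 ≤ b) :
    ∫ p in Ioi 0 ×ˢ Ioo 0 b, mirrorDiff (halfKernel α p.2) a p.1 ≤
      1 / α * (a ^ (1 - 2 * α) / (1 - 2 * α) - a * (a ^ 2 + b ^ 2) ^ (-α)) := by
  calc ∫ p in Ioi 0 ×ˢ Ioo 0 b, mirrorDiff (halfKernel α p.2) a p.1
      = ∫ y in Ioi 0, ∫ s in Ioo 0 b, mirrorDiff (halfKernel α s) a y :=
        setIntegral_prod _ (integrableOn_mirrorDiff_halfKernel hα hα0 ha hb)
    _ = ∫ y in Ioi 0, mirrorDiff (halfKernelIntegral α b) a y :=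
        integral_congr_ae (integral_mirrorDiff_halfKernel_ae_eq hα0 ha hb)
    _ ≤ 2 * ∫ t in 0..a, halfKernelIntegral α b t :=
        setIntegral_mirrorDiff_le (even_halfKernelIntegral α b)
          (intervalIntegrable_halfKernelIntegral hα.2 b)
          (fun t ht => halfKernelIntegral_nonneg hα0 hb ht.ne')
          (antitoneOn_halfKernelIntegral hα.1 hα0 hb) ha
    _ ≤ _ := two_mul_integral_halfKernelIntegral_le hα.2 ha b

end Strip

lemma edist2_rpow (α : ℝ) (p q : ℝ × ℝ) :
    edist2 p q ^ (2 + 2 * α) = ((p.1 - q.1) ^ 2 + (p.2 - q.2) ^ 2) ^ (1 + α) := by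
  rw [edist2, Real.sqrt_eq_rpow, ← Real.rpow_mul (by positivity)]
  congr 1
  ring

lemma K1_eq_mirrorDiff_sub (α : ℝ) (x y : ℝ × ℝ) :
    K1 α x y = mirrorDiff (halfKernel α (x.2 + y.2)) x.1 y.1 -
      mirrorDiff (halfKernel α (x.2 - y.2)) x.1 y.1 := by
  simp only [K1, edist2_rpow, mirrorDiff, halfKernel, sub_neg_eq_add]
  ring

section K1

variable {α w : ℝ} {x y : ℝ × ℝ}

lemma neg_K1_mul_le (hα : -1 ≤ α) (hw : w ∈ Icc 0 1) (hx : 0 ≤ x.1) (hy1 : 0 ≤ y.1)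
    (hy2 : 0 < y.2) (hyx : y.2 < x.2) :
    -(K1 α x y * w) ≤ mirrorDiff (halfKernel α (x.2 - y.2)) x.1 y.1 := by
  have hnear : 0 ≤ mirrorDiff (halfKernel α (x.2 - y.2)) x.1 y.1 :=
    mirrorDiff_halfKernel_nonneg hα (by linarith) hx hy1
  have hfar : 0 ≤ mirrorDiff (halfKernel α (x.2 + y.2)) x.1 y.1 :=
    mirrorDiff_halfKernel_nonneg hα (by linarith) hx hy1
  rw [K1_eq_mirrorDiff_sub]
  linarith [mul_le_of_le_one_right hnear hw.2, mul_nonneg hfar hw.1]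

lemma integrableOn_mirrorDiff_halfKernel_sub (hα : α ∈ Ico (-1) (1 / 2)) (hα0 : α ≠ 0)
    (hx1 : 0 ≤ x.1) (hx2 : 0 ≤ x.2) :
    IntegrableOn (fun y : ℝ × ℝ => mirrorDiff (halfKernel α (x.2 - y.2)) x.1 y.1)
      (Ioi 0 ×ˢ Ioo 0 x.2) := by
  simpa [Measure.volume_eq_prod] using (integrableOn_prod_comp_snd_iff
    (Measure.measurePreserving_sub_left volume x.2)
    (MeasurableEquiv.subLeft x.2).measurableEmbedding).2
    (integrableOn_mirrorDiff_halfKernel hα hα0 hx1 hx2)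

lemma integrableOn_mirrorDiff_halfKernel_add (hα : α ∈ Ico (-1) (1 / 2)) (hα0 : α ≠ 0)
    (hx1 : 0 ≤ x.1) (hx2 : 0 ≤ x.2) :
    IntegrableOn (fun y : ℝ × ℝ => mirrorDiff (halfKernel α (x.2 + y.2)) x.1 y.1)
      (Ioi 0 ×ˢ Ioo 0 x.2) := by
  refine ((integrableOn_prod_comp_snd_iff (measurePreserving_add_left volume x.2)
    (measurableEmbedding_addLeft x.2)).2 (integrableOn_mirrorDiff_halfKernel hα hα0 hx1
      (add_nonneg hx2 hx2))).mono_set (prod_mono_right fun s hs => ?_)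
  exact ⟨add_pos_of_nonneg_of_pos hx2 hs.1, add_lt_add_right hs.2 x.2⟩

lemma integrableOn_K1 (hα : α ∈ Ico (-1) (1 / 2)) (hα0 : α ≠ 0) (hx1 : 0 ≤ x.1) (hx2 : 0 ≤ x.2) :
    IntegrableOn (K1 α x) (Ioi 0 ×ˢ Ioo 0 x.2) := by
  simpa only [funext (K1_eq_mirrorDiff_sub α x)] using!
    (integrableOn_mirrorDiff_halfKernel_add hα hα0 hx1 hx2).sub
      (integrableOn_mirrorDiff_halfKernel_sub hα hα0 hx1 hx2)

lemma setIntegral_mirrorDiff_halfKernel_sub (α : ℝ) (x : ℝ × ℝ) :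
    ∫ y in Ioi 0 ×ˢ Ioo 0 x.2, mirrorDiff (halfKernel α (x.2 - y.2)) x.1 y.1 =
      ∫ p in Ioi 0 ×ˢ Ioo 0 x.2, mirrorDiff (halfKernel α p.2) x.1 p.1 := by
  simpa [Measure.volume_eq_prod] using setIntegral_prod_comp_snd (μ := volume)
    (Measure.measurePreserving_sub_left volume x.2)
    (MeasurableEquiv.subLeft x.2).measurableEmbedding
    (fun p => mirrorDiff (halfKernel α p.2) x.1 p.1) (Ioi 0) (Ioo 0 x.2)

end K1

lemma mem_closure_Dplus {x : ℝ × ℝ} : x ∈ closure Dplus ↔ 0 ≤ x.1 ∧ 0 ≤ x.2 := by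
  rw [Dplus, closure_prod_eq, closure_Ioi, mem_prod, mem_Ici, mem_Ici]

lemma strip_bound_le_of_le {α a b : ℝ} (hα : α < 1 / 2) (hb : 0 ≤ b) (hba : b ≤ a) :
    1 / α * (a ^ (1 - 2 * α) / (1 - 2 * α) - a * (a ^ 2 + b ^ 2) ^ (-α)) ≤
      1 / α * (1 / (1 - 2 * α) - 2 ^ (-α)) * a ^ (1 - 2 * α) := by
  rcases (hb.trans hba).eq_or_lt with rfl | ha
  · simp [Real.zero_rpow (show 1 - 2 * α ≠ 0 by linarith)]
  have hle : a ^ 2 + b ^ 2 ≤ 2 * a ^ 2 := by nlinarith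
  have hanti : (2 * a ^ 2) ^ (-α) / α ≤ (a ^ 2 + b ^ 2) ^ (-α) / α :=
    antitoneOn_rpow_neg_div α (mem_Ioi.2 (by positivity)) (mem_Ioi.2 (by positivity)) hle
  have hscale : a * (2 * a ^ 2) ^ (-α) = 2 ^ (-α) * a ^ (1 - 2 * α) := by
    rw [Real.mul_rpow zero_le_two (by positivity), sq_rpow_neg α ha.le, sub_eq_add_neg,
      ← neg_mul, Real.rpow_one_add' ha.le (by linarith)]
    ring
  calc 1 / α * (a ^ (1 - 2 * α) / (1 - 2 * α) - a * (a ^ 2 + b ^ 2) ^ (-α))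
      = a ^ (1 - 2 * α) / (1 - 2 * α) / α - a * ((a ^ 2 + b ^ 2) ^ (-α) / α) := by ring
    _ ≤ a ^ (1 - 2 * α) / (1 - 2 * α) / α - a * ((2 * a ^ 2) ^ (-α) / α) := by gcongr
    _ = a ^ (1 - 2 * α) / (1 - 2 * α) / α - a * (2 * a ^ 2) ^ (-α) / α := by ring
    _ = 1 / α * (1 / (1 - 2 * α) - 2 ^ (-α)) * a ^ (1 - 2 * α) := by rw [hscale]; ring

theorem stmt3_general {α : ℝ} (hα : α ∈ Ico (-1) (1 / 2)) (hα0 : α ≠ 0) {ω : ℝ × ℝ → ℝ}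
    (hmeas : Measurable ω) (hbd : ∀ y ∈ Dplus, 0 ≤ ω y ∧ ω y ≤ 1) {x : ℝ × ℝ}
    (hx : x ∈ closure Dplus) :
    -∫ y in Ioi 0 ×ˢ Ioo 0 x.2, K1 α x y * ω y ≤
      1 / α * (x.1 ^ (1 - 2 * α) / (1 - 2 * α) - x.1 * (x.1 ^ 2 + x.2 ^ 2) ^ (-α)) := by
  obtain ⟨hx1, hx2⟩ := mem_closure_Dplus.1 hx
  have hstrip : MeasurableSet (Ioi (0 : ℝ) ×ˢ Ioo 0 x.2) := measurableSet_Ioi.prod measurableSet_Ioo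
  have hω : ∀ y ∈ Ioi (0 : ℝ) ×ˢ Ioo 0 x.2, ω y ∈ Icc 0 1 := fun y hy => hbd y ⟨hy.1, hy.2.1⟩
  have hint : IntegrableOn (fun y => K1 α x y * ω y) (Ioi 0 ×ˢ Ioo 0 x.2) :=
    (integrableOn_K1 hα hα0 hx1 hx2).mul_bdd (c := 1) hmeas.aestronglyMeasurable <|
      ae_restrict_of_forall_mem hstrip fun y hy => by
        simpa only [Real.norm_of_nonneg (hω y hy).1] using (hω y hy).2
  calc -∫ y in Ioi 0 ×ˢ Ioo 0 x.2, K1 α x y * ω y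
      = ∫ y in Ioi 0 ×ˢ Ioo 0 x.2, -(K1 α x y * ω y) := (integral_neg _).symm
    _ ≤ ∫ y in Ioi 0 ×ˢ Ioo 0 x.2, mirrorDiff (halfKernel α (x.2 - y.2)) x.1 y.1 :=
        setIntegral_mono_on hint.neg (integrableOn_mirrorDiff_halfKernel_sub hα hα0 hx1 hx2)
          hstrip fun y hy => neg_K1_mul_le hα.1 (hω y hy) hx1 (le_of_lt hy.1) hy.2.1 hy.2.2
    _ = ∫ p in Ioi 0 ×ˢ Ioo 0 x.2, mirrorDiff (halfKernel α p.2) x.1 p.1 :=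
        setIntegral_mirrorDiff_halfKernel_sub α x
    _ ≤ _ := setIntegral_mirrorDiff_halfKernel_le hα hα0 hx1 hx2

/-- For `α ∈ (0,1/2)` and `ω : ℝ×(0,∞) → ℝ` measurable, odd in `x₁`,
with `0 ≤ ω ≤ 1` on `D⁺`: for every `x` in the closure of `D⁺` with `x₂ ≤ x₁`,
`-∫_{(0,∞)×(0,x₂)} K1(x,y) ω(y) dy ≤ (1/α)·(1/(1-2α) - 2^{-α})·x₁^{1-2α}`. -/
theorem stmt3 (α : ℝ) (hα : α ∈ Set.Ioo (0 : ℝ) (1/2))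
    (ω : ℝ × ℝ → ℝ) (hmeas : Measurable ω)
    (hodd : ∀ y : ℝ × ℝ, 0 < y.2 → ω (-y.1, y.2) = -ω (y.1, y.2))
    (hbd : ∀ y ∈ Dplus, 0 ≤ ω y ∧ ω y ≤ 1)
    (x : ℝ × ℝ) (hx : x ∈ closure Dplus) (hx21 : x.2 ≤ x.1) :
    -∫ y in Set.Ioi (0 : ℝ) ×ˢ Set.Ioo 0 x.2, K1 α x y * ω y ≤
      1 / α * (1 / (1 - 2 * α) - 2 ^ (-α)) * x.1 ^ (1 - 2 * α) :=
  (stmt3_general ⟨by linarith [hα.1], hα.2⟩ hα.1.ne' hmeas hbd hx).trans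
    (strip_bound_le_of_le hα.2 (mem_closure_Dplus.1 hx).2 hx21)
end
end

section
/- Let γ ∈ (0,1], let Ω ⊆ ℝ×(0,∞) be a bounded open set, and let φ : ℝ² → ℝ be differentiable on the closure of Ω with φ > 0 on Ω, φ = 0 on ∂Ω, and with gradient satisfying |∇φ(x) − ∇φ(y)| ≤ A·|x−y|^γ for all x, y in the closure of Ω, where A > 0. Then for every point P = (p1,p2) ∈ ∂Ω, one has |∂₁φ(P)| ≤ 2·( A · p2^γ · |∇φ(P)|^γ )^{1/(1+γ)}. -/
noncomputable section

/-- The plane with the Euclidean norm. -/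
abbrev E2 := EuclideanSpace ℝ (Fin 2)

/-!
From a point `x ∈ Ω` near `P`, run in a direction `d` that points towards the bounding hyperplane.
The ray leaves the half-space, hence `Ω`, after a length about `p₂ ‖d‖ / |d₂|`; since `φ` drops from
a positive value to zero on the way, its derivative along `d` is negative at some point that close
to `P`. The Hölder condition then bounds `⟪∇φ(P), d⟫` from above. With `e` the inner unit normal of
the half-space, the choice `d = ∇φ(P) - |∇φ(P)| e`, which bisects the angle between `∇φ(P)` and
`-e`, turns this into a bound on `‖d‖`. Finally `∂₁φ(P)` is a coordinate of `d`, because `e ⟂ e₁`.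
-/

open Real Set Filter Topology RealInnerProductSpace

section NormedSpace

variable {E : Type*} [NormedAddCommGroup E] [NormedSpace ℝ E] {Ω : Set E} {φ : E → ℝ}
  {φ' : E → StrongDual ℝ E}

lemma exists_mem_frontier_segment_subset_closure (hΩ : IsOpen Ω) {x z : E} (hx : x ∈ Ω)
    (hz : z ∉ Ω) : ∃ y ∈ segment ℝ x z, y ∈ frontier Ω ∧ segment ℝ x y ⊆ closure Ω := by
  have hcompact : IsCompact (segment ℝ x z ∩ Ωᶜ) := by
    rw [segment_eq_image_lineMap]
    exact (isCompact_Icc.image AffineMap.lineMap_continuous).inter_right hΩ.isClosed_compl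
  obtain ⟨y, ⟨hyseg, hyΩ⟩, hmin⟩ := hcompact.exists_isMinOn ⟨z, right_mem_segment ℝ x z, hz⟩
    (continuous_const.dist continuous_id : Continuous (dist x)).continuousOn
  have hopen : openSegment ℝ x y ⊆ Ω := by
    intro w hw
    by_contra hwΩ
    have hwseg : w ∈ segment ℝ x z :=
      (convex_segment x z).segment_subset (left_mem_segment ℝ x z) hyseg
        (openSegment_subset_segment ℝ x y hw)
    have hle : dist x y ≤ dist x w := hmin ⟨hwseg, hwΩ⟩
    have hadd := dist_add_dist_of_mem_segment (openSegment_subset_segment ℝ x y hw)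
    have hwy : w = y := dist_le_zero.1 (by linarith)
    have hxy : x = y := right_mem_openSegment_iff.1 (hwy ▸ hw)
    exact hyΩ (hxy ▸ hx)
  have hclosure : segment ℝ x y ⊆ closure Ω :=
    segment_subset_closure_openSegment.trans (closure_mono hopen)
  refine ⟨y, hyseg, ?_, hclosure⟩
  rw [hΩ.frontier_eq]
  exact ⟨hclosure (right_mem_segment ℝ x y), hyΩ⟩

lemma exists_mem_segment_fderiv_neg_of_frontier_lt (hΩ : IsOpen Ω)
    (hφ : ∀ x ∈ closure Ω, HasFDerivWithinAt φ (φ' x) (closure Ω) x) {x z : E} (hx : x ∈ Ω)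
    (hz : z ∉ Ω) (hlt : ∀ y ∈ frontier Ω, φ y < φ x) :
    ∃ y ∈ segment ℝ x z, y ∈ closure Ω ∧ φ' y (z - x) < 0 := by
  obtain ⟨w, hw, hwfr, hsub⟩ := exists_mem_frontier_segment_subset_closure hΩ hx hz
  obtain ⟨y, hy, hmvt⟩ := domain_mvt (fun v hv => (hφ v (hsub hv)).mono hsub)
    (convex_segment x w) (left_mem_segment ℝ x w) (right_mem_segment ℝ x w)
  refine ⟨y, (convex_segment x z).segment_subset (left_mem_segment ℝ x z) hw hy, hsub hy, ?_⟩
  rw [segment_eq_image'] at hw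
  obtain ⟨θ, ⟨hθ, -⟩, hθw⟩ := hw
  have hwx : w - x = θ • (z - x) := by simp [← hθw]
  rw [hwx, map_smul, smul_eq_mul] at hmvt
  exact neg_of_mul_neg_right (hmvt ▸ sub_neg.2 (hlt w hwfr)) hθ

variable {ℓ : StrongDual ℝ E} {P d : E}

lemma exists_norm_sub_lt_fderiv_neg_of_subset_halfSpace (hΩ : IsOpen Ω) (hℓ : ∀ x ∈ Ω, 0 < ℓ x)
    (hφ : ∀ x ∈ closure Ω, HasFDerivWithinAt φ (φ' x) (closure Ω) x) (hpos : ∀ x ∈ Ω, 0 < φ x)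
    (hzero : ∀ x ∈ frontier Ω, φ x = 0) (hP : P ∈ closure Ω) (hd : ℓ d < 0) {δ : ℝ}
    (hδ : ℓ P * (‖d‖ / -ℓ d) < δ) : ∃ y ∈ closure Ω, ‖y - P‖ < δ ∧ φ' y d < 0 := by
  have hnear : ∀ᶠ x in 𝓝 P, ‖x - P‖ + ℓ x * (‖d‖ / -ℓ d) < δ := by
    have hcont : Continuous fun x => ‖x - P‖ + ℓ x * (‖d‖ / -ℓ d) := by fun_prop
    exact hcont.continuousAt.eventually_lt_const (by simpa using hδ)
  obtain ⟨x, hxδ, hx⟩ := mem_closure_iff_nhds.1 hP _ hnear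
  set t := ℓ x / -ℓ d with ht
  have htpos : 0 < t := div_pos (hℓ x hx) (neg_pos.2 hd)
  have hexit : x + t • d ∉ Ω := fun hmem => by
    have hℓexit : ℓ (x + t • d) = 0 := by
      have := hd.ne
      simp only [map_add, map_smul, smul_eq_mul, ht]
      field_simp
      ring
    exact (hℓ _ hmem).ne' hℓexit
  obtain ⟨y, hyseg, hy, hneg⟩ := exists_mem_segment_fderiv_neg_of_frontier_lt hΩ hφ hx hexit
    fun y hy => (hzero y hy).trans_lt (hpos x hx)
  refine ⟨y, hy, ?_, ?_⟩
  · calc ‖y - P‖ ≤ ‖x - P‖ + ‖y - x‖ := by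
          rw [add_comm]; exact norm_sub_le_norm_sub_add_norm_sub y x P
      _ ≤ ‖x - P‖ + ‖x + t • d - x‖ := by gcongr; exact norm_sub_le_of_mem_segment hyseg
      _ = ‖x - P‖ + ℓ x * (‖d‖ / -ℓ d) := by
          rw [add_sub_cancel_left, norm_smul, Real.norm_of_nonneg htpos.le, ht]
          ring
      _ < δ := hxδ
  · rw [add_sub_cancel_left, map_smul, smul_eq_mul] at hneg
    exact neg_of_mul_neg_right hneg htpos.le

lemma fderiv_apply_le_of_holder_of_subset_halfSpace (hΩ : IsOpen Ω) (hℓ : ∀ x ∈ Ω, 0 < ℓ x)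
    (hφ : ∀ x ∈ closure Ω, HasFDerivWithinAt φ (φ' x) (closure Ω) x) (hpos : ∀ x ∈ Ω, 0 < φ x)
    (hzero : ∀ x ∈ frontier Ω, φ x = 0) (hP : P ∈ closure Ω) {A γ : ℝ} (hA : 0 ≤ A) (hγ : 0 ≤ γ)
    (hHolder : ∀ x ∈ closure Ω, ‖φ' P - φ' x‖ ≤ A * ‖P - x‖ ^ γ) (hd : ℓ d < 0) :
    φ' P d ≤ A * (ℓ P * (‖d‖ / -ℓ d)) ^ γ * ‖d‖ := by
  set δ₀ := ℓ P * (‖d‖ / -ℓ d)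
  have hbound : ∀ δ ∈ Ioi δ₀, φ' P d ≤ A * δ ^ γ * ‖d‖ := by
    intro δ hδ
    obtain ⟨y, hy, hyδ, hneg⟩ :=
      exists_norm_sub_lt_fderiv_neg_of_subset_halfSpace hΩ hℓ hφ hpos hzero hP hd hδ
    rw [norm_sub_rev] at hyδ
    calc φ' P d ≤ (φ' P - φ' y) d := by rw [sub_apply]; linarith
      _ ≤ ‖φ' P - φ' y‖ * ‖d‖ := (le_abs_self _).trans ((φ' P - φ' y).le_opNorm d)
      _ ≤ A * ‖P - y‖ ^ γ * ‖d‖ := by gcongr; exact hHolder y hy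
      _ ≤ A * δ ^ γ * ‖d‖ := by gcongr
  have hcont : Continuous fun δ : ℝ => A * δ ^ γ * ‖d‖ :=
    (continuous_const.mul (continuous_id.rpow_const fun _ => Or.inr hγ)).mul_const _
  exact ge_of_tendsto (hcont.continuousWithinAt (s := Ioi δ₀) (x := δ₀))
    (eventually_mem_nhdsWithin.mono hbound)

end NormedSpace

lemma le_rpow_one_div_of_le_mul_div_rpow {A b m γ : ℝ} (hb : 0 ≤ b) (hm : 0 < m) (hγ : 0 ≤ γ)
    (h : m ≤ A * (b / m) ^ γ) : m ≤ (A * b ^ γ) ^ (1 / (1 + γ)) := by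
  have hpow : m ^ (1 + γ) ≤ A * b ^ γ := by
    rw [rpow_one_add' hm.le (by positivity)]
    rw [div_rpow hb hm.le, ← mul_div_assoc] at h
    exact (le_div_iff₀ (by positivity)).1 h
  rw [one_div]
  exact (le_rpow_inv_iff_of_pos hm.le ((rpow_nonneg hm.le _).trans hpow) (by positivity)).2 hpow

section InnerProductSpace

variable {F : Type*} [NormedAddCommGroup F] [InnerProductSpace ℝ F]

lemma inner_self_sub_of_norm_eq {v w : F} (h : ‖v‖ = ‖w‖) : ⟪v, v - w⟫ = ‖v - w‖ ^ 2 / 2 := by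
  have hexpand := norm_sub_sq_real v w
  rw [inner_sub_right, real_inner_self_eq_norm_sq]
  rw [← h] at hexpand
  linarith

lemma norm_mul_inner_sub_norm_smul {e : F} (he : ‖e‖ = 1) (v : F) :
    ‖v‖ * ⟪e, v - ‖v‖ • e⟫ = -(‖v - ‖v‖ • e‖ ^ 2 / 2) := by
  have hnorm : ‖‖v‖ • e‖ = ‖v‖ := by rw [norm_smul, norm_norm, he, mul_one]
  rw [← real_inner_smul_left, ← neg_sub, inner_neg_right, inner_self_sub_of_norm_eq hnorm, norm_neg]

theorem stmt9_general [CompleteSpace F] {γ A : ℝ} (hγ : 0 ≤ γ) (hA : 0 ≤ A) {e : F}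
    (he : ‖e‖ = 1) {Ω : Set F} (hΩ : IsOpen Ω) (hΩe : ∀ x ∈ Ω, 0 < ⟪e, x⟫) {φ : F → ℝ} {g : F → F}
    (hgrad : ∀ x ∈ closure Ω, HasGradientWithinAt φ (g x) (closure Ω) x)
    (hpos : ∀ x ∈ Ω, 0 < φ x) (hzero : ∀ x ∈ frontier Ω, φ x = 0) {P : F} (hP : P ∈ closure Ω)
    (hHolder : ∀ x ∈ closure Ω, ‖g P - g x‖ ≤ A * ‖P - x‖ ^ γ) :
    ‖g P - ‖g P‖ • e‖ ≤ 2 * (A * ⟪e, P⟫ ^ γ * ‖g P‖ ^ γ) ^ (1 / (1 + γ)) := by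
  have hPe : 0 ≤ ⟪e, P⟫ :=
    closure_minimal (fun x hx => (hΩe x hx).le)
      (isClosed_le continuous_const (by fun_prop : Continuous fun x => ⟪e, x⟫)) hP
  set n := ‖g P‖
  set d := g P - n • e
  rcases (norm_nonneg d).eq_or_lt with hd | hd
  · rw [← hd]
    positivity
  have hn : 0 ≤ n := norm_nonneg _
  have hgd : ⟪g P, d⟫ = ‖d‖ ^ 2 / 2 := inner_self_sub_of_norm_eq (by simp [norm_smul, he, n])
  have hed : n * ⟪e, d⟫ = -(‖d‖ ^ 2 / 2) := norm_mul_inner_sub_norm_smul he (g P)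
  have hed_neg : ⟪e, d⟫ < 0 :=
    neg_of_mul_neg_right (hed.trans_lt (neg_neg_of_pos (by positivity))) hn
  have hle : ⟪g P, d⟫ ≤ A * (⟪e, P⟫ * (‖d‖ / -⟪e, d⟫)) ^ γ * ‖d‖ :=
    fderiv_apply_le_of_holder_of_subset_halfSpace (ℓ := innerSL ℝ e) hΩ hΩe
      (fun x hx => (hgrad x hx).hasFDerivWithinAt) hpos hzero hP hA hγ
      (fun x hx => by simpa only [← map_sub, LinearIsometryEquiv.norm_map] using hHolder x hx)
      hed_neg
  have hratio : ‖d‖ / -⟪e, d⟫ = n / (‖d‖ / 2) := by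
    rw [div_eq_div_iff (neg_pos.2 hed_neg).ne' (by positivity)]
    linarith
  have hhalf : ‖d‖ / 2 ≤ A * (⟪e, P⟫ * n / (‖d‖ / 2)) ^ γ := by
    rw [hgd, hratio, ← mul_div_assoc] at hle
    exact le_of_mul_le_mul_right (by linarith) hd
  have hroot := le_rpow_one_div_of_le_mul_div_rpow (mul_nonneg hPe hn) (half_pos hd) hγ hhalf
  rw [mul_rpow hPe hn, ← mul_assoc] at hroot
  linarith

end InnerProductSpace

lemma abs_apply_le_norm_sub_smul_single {ι : Type*} [Fintype ι] [DecidableEq ι] {i j : ι}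
    (hij : i ≠ j) (v : EuclideanSpace ℝ ι) (c : ℝ) :
    |v i| ≤ ‖v - c • EuclideanSpace.single j (1 : ℝ)‖ := by
  simpa [hij] using PiLp.norm_apply_le (v - c • EuclideanSpace.single j (1 : ℝ)) i

/-- Let `γ ∈ (0,1]`, let `Ω ⊆ ℝ×(0,∞)` be bounded and open, and let
`φ` be differentiable on the closure of `Ω` (with gradient `g`), positive on `Ω`, zero on `∂Ω`,
with `|∇φ(x) - ∇φ(y)| ≤ A·|x-y|^γ` on the closure of `Ω`, where `A > 0`.  Then for every
`P = (p₁,p₂) ∈ ∂Ω` one has `|∂₁φ(P)| ≤ 2·(A·p₂^γ·|∇φ(P)|^γ)^{1/(1+γ)}`. -/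
theorem stmt9 (γ A : ℝ) (hγ : γ ∈ Set.Ioc (0 : ℝ) 1) (hA : 0 < A)
    (Ω : Set E2) (hΩopen : IsOpen Ω) (hΩbdd : Bornology.IsBounded Ω)
    (hΩD : Ω ⊆ {x : E2 | 0 < x 1})
    (φ : E2 → ℝ) (g : E2 → E2)
    (hgrad : ∀ x ∈ closure Ω, HasGradientWithinAt φ (g x) (closure Ω) x)
    (hHolder : ∀ x ∈ closure Ω, ∀ y ∈ closure Ω, ‖g x - g y‖ ≤ A * ‖x - y‖ ^ γ)
    (hpos : ∀ x ∈ Ω, 0 < φ x)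
    (hzero : ∀ x ∈ frontier Ω, φ x = 0) :
    ∀ P ∈ frontier Ω, |g P 0| ≤ 2 * (A * (P 1) ^ γ * ‖g P‖ ^ γ) ^ (1 / (1 + γ)) := by
  intro P hP
  have hPcl := frontier_subset_closure hP
  refine (abs_apply_le_norm_sub_smul_single zero_ne_one (g P) ‖g P‖).trans ?_
  have hinner (x : E2) : ⟪EuclideanSpace.single 1 1, x⟫ = x 1 := by
    simp [EuclideanSpace.inner_single_left]
  rw [← hinner]
  exact stmt9_general hγ.1.le hA.le (by simp) hΩopen (fun x hx => (hinner x).symm ▸ hΩD hx)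
    hgrad hpos hzero hPcl (hHolder P hPcl)
end
end

section
/- Let γ ∈ (0,1] and let φ : ℝ² → ℝ be differentiable with |∇φ(x) − ∇φ(y)| ≤ Ã·|x−y|^γ for all x, y ∈ ℝ², where 0 < Ã < ∞. Let P ∈ ℝ² satisfy φ(P) = 0 and ∇φ(P) ≠ 0, set n := ∇φ(P)/|∇φ(P)| and r := ( |∇φ(P)|/(2Ã) )^{1/γ}. Then for every unit vector ν and every ρ ∈ (0,r) with (ρ/r)^γ < 2|ν·n|: if ν·n ≥ 0 then φ(P + ρν) > 0, and if ν·n ≤ 0 then φ(P + ρν) < 0. -/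
open RealInnerProductSpace

noncomputable section

/-! By the mean value inequality the Hölder bound controls the first-order Taylor remainder:
`|φ(P + ρν) - φ(P) - ρ ν⋅∇φ(P)| ≤ A ρ^γ ρ`. Since `r^γ = |∇φ(P)| / (2A)`, the condition
`(ρ/r)^γ < 2|ν⋅n|` says precisely that `A ρ^γ < |ν⋅∇φ(P)|`, so the linear term dominates the
remainder and decides the sign. -/

section TaylorRemainder

variable {A γ : ℝ}

theorem norm_image_sub_sub_le_of_hasFDerivWithinAt_of_norm_sub_le_rpow
    {𝕜 E G : Type*} [RCLike 𝕜] [NormedAddCommGroup E] [NormedSpace ℝ E] [NormedSpace 𝕜 E]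
    [NormedAddCommGroup G] [NormedSpace 𝕜 G] {f : E → G} {f' : E → E →L[𝕜] G} {s : Set E}
    {x y : E} (hA : 0 ≤ A) (hγ : 0 ≤ γ) (hs : Convex ℝ s)
    (hf : ∀ z ∈ s, HasFDerivWithinAt f (f' z) s z)
    (hf' : ∀ z ∈ s, ‖f' z - f' x‖ ≤ A * ‖z - x‖ ^ γ) (hx : x ∈ s) (hy : y ∈ s) :
    ‖f y - f x - f' x (y - x)‖ ≤ A * ‖y - x‖ ^ γ * ‖y - x‖ := by
  have hsegment : segment ℝ x y ⊆ s := hs.segment_subset hx hy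
  refine (convex_segment x y).norm_image_sub_le_of_norm_hasFDerivWithin_le'
    (fun z hz => (hf z (hsegment hz)).mono hsegment) (fun z hz => ?_)
    (left_mem_segment ℝ x y) (right_mem_segment ℝ x y)
  calc ‖f' z - f' x‖ ≤ A * ‖z - x‖ ^ γ := hf' z (hsegment hz)
    _ ≤ A * ‖y - x‖ ^ γ := by
      gcongr
      exact norm_sub_le_of_mem_segment hz

theorem abs_sub_sub_inner_gradient_le_of_norm_sub_le_rpow
    {F : Type*} [NormedAddCommGroup F] [InnerProductSpace ℝ F] [CompleteSpace F]
    {f : F → ℝ} {s : Set F} {x y : F} (hA : 0 ≤ A) (hγ : 0 ≤ γ) (hs : Convex ℝ s)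
    (hf : ∀ z ∈ s, DifferentiableAt ℝ f z)
    (hf' : ∀ z ∈ s, ‖gradient f z - gradient f x‖ ≤ A * ‖z - x‖ ^ γ) (hx : x ∈ s) (hy : y ∈ s) :
    |f y - f x - ⟪gradient f x, y - x⟫| ≤ A * ‖y - x‖ ^ γ * ‖y - x‖ :=
  norm_image_sub_sub_le_of_hasFDerivWithinAt_of_norm_sub_le_rpow
    (f' := fun z => InnerProductSpace.toDual ℝ F (gradient f z)) hA hγ hs
    (fun z hz => (hf z hz).hasGradientAt.hasFDerivAt.hasFDerivWithinAt)
    (fun z hz => by simpa only [← map_sub, LinearIsometryEquiv.norm_map] using hf' z hz) hx hy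

end TaylorRemainder

theorem div_rpow_one_div_rpow {a b p : ℝ} (ha : 0 ≤ a) (hb : 0 ≤ b) (hp : p ≠ 0) :
    (a / b ^ (1 / p)) ^ p = a ^ p / b := by
  rw [Real.div_rpow ha (Real.rpow_nonneg hb _), one_div, Real.rpow_inv_rpow hb hp]

theorem div_rpow_lt_two_mul_abs_inner_iff {F : Type*} [NormedAddCommGroup F]
    [InnerProductSpace ℝ F] {A γ ρ : ℝ} {g ν : F} (hA : 0 < A) (hγ : γ ≠ 0) (hρ : 0 ≤ ρ)
    (hg : g ≠ 0) :
    (ρ / (‖g‖ / (2 * A)) ^ (1 / γ)) ^ γ < 2 * |⟪ν, ‖g‖⁻¹ • g⟫| ↔ A * ρ ^ γ < |⟪ν, g⟫| := by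
  have hg' : 0 < ‖g‖ := norm_pos_iff.mpr hg
  have hthreshold : 2 * |⟪ν, ‖g‖⁻¹ • g⟫| * (‖g‖ / (2 * A)) = |⟪ν, g⟫| / A := by
    rw [real_inner_smul_right, abs_mul, abs_of_pos (inv_pos.mpr hg')]
    field_simp
  rw [div_rpow_one_div_rpow hρ (by positivity) hγ, div_lt_iff₀ (by positivity), hthreshold,
    lt_div_iff₀' hA]

theorem stmt11_general {F : Type*} [NormedAddCommGroup F] [InnerProductSpace ℝ F]
    [CompleteSpace F] {A γ ρ : ℝ} {φ : F → ℝ} {P ν : F} (hA : 0 < A) (hγ : 0 < γ) (hρ : 0 < ρ)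
    (hφ : ∀ x ∈ Metric.closedBall P ρ, DifferentiableAt ℝ φ x)
    (hHolder : ∀ x ∈ Metric.closedBall P ρ, ‖gradient φ x - gradient φ P‖ ≤ A * ‖x - P‖ ^ γ)
    (hgP : gradient φ P ≠ 0) (hν : ‖ν‖ = 1)
    (hcone : (ρ / (‖gradient φ P‖ / (2 * A)) ^ (1 / γ)) ^ γ <
      2 * |⟪ν, ‖gradient φ P‖⁻¹ • gradient φ P⟫|) :
    (0 ≤ ⟪ν, ‖gradient φ P‖⁻¹ • gradient φ P⟫ → φ P < φ (P + ρ • ν)) ∧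
    (⟪ν, ‖gradient φ P‖⁻¹ • gradient φ P⟫ ≤ 0 → φ (P + ρ • ν) < φ P) := by
  have hnorm : ‖ρ • ν‖ = ρ := by rw [norm_smul, hν, mul_one, Real.norm_of_nonneg hρ.le]
  have hremainder : |φ (P + ρ • ν) - φ P - ρ * ⟪ν, gradient φ P⟫| ≤ A * ρ ^ γ * ρ := by
    have hmem : P + ρ • ν ∈ Metric.closedBall P ρ := by
      rw [mem_closedBall_iff_norm, add_sub_cancel_left, hnorm]
    simpa only [add_sub_cancel_left, hnorm, real_inner_smul_right, real_inner_comm] using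
      abs_sub_sub_inner_gradient_le_of_norm_sub_le_rpow hA.le hγ.le (convex_closedBall P ρ)
        hφ hHolder (Metric.mem_closedBall_self hρ.le) hmem
  have hdominates : A * ρ ^ γ * ρ < |⟪ν, gradient φ P⟫| * ρ := by
    gcongr
    exact (div_rpow_lt_two_mul_abs_inner_iff hA hγ.ne' hρ.le hgP).mp hcone
  obtain ⟨hlower, hupper⟩ := abs_le.mp hremainder
  have hg : 0 < ‖gradient φ P‖⁻¹ := inv_pos.mpr (norm_pos_iff.mpr hgP)
  rw [inner_smul_right_eq_smul, smul_nonneg_iff_nonneg_of_pos_left hg,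
    smul_nonpos_iff_nonpos_of_pos_left hg]
  constructor <;> intro hsign
  · rw [abs_of_nonneg hsign] at hdominates
    linarith
  · rw [abs_of_nonpos hsign] at hdominates
    linarith

/-- Let `γ ∈ (0,1]` and `φ : ℝ² → ℝ` differentiable with
`|∇φ(x) - ∇φ(y)| ≤ Ã·|x-y|^γ` for all `x,y`, where `0 < Ã`.  Let `φ(P) = 0`, `∇φ(P) ≠ 0`,
`n := ∇φ(P)/|∇φ(P)|`, `r := (|∇φ(P)|/(2Ã))^{1/γ}`.  Then for every unit vector `ν` and
`ρ ∈ (0,r)` with `(ρ/r)^γ < 2|ν⋅n|`: if `ν⋅n ≥ 0` then `φ(P + ρν) > 0`, and if `ν⋅n ≤ 0`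
then `φ(P + ρν) < 0`. -/
theorem stmt11 (γ Atil : ℝ) (hγ : γ ∈ Set.Ioc (0 : ℝ) 1) (hA : 0 < Atil)
    (φ : E2 → ℝ) (hφ : Differentiable ℝ φ)
    (hHolder : ∀ x y : E2, ‖gradient φ x - gradient φ y‖ ≤ Atil * ‖x - y‖ ^ γ)
    (P : E2) (hP : φ P = 0) (hgP : gradient φ P ≠ 0)
    (ν : E2) (hν : ‖ν‖ = 1) (ρ : ℝ)
    (hρ : ρ ∈ Set.Ioo 0 ((‖gradient φ P‖ / (2 * Atil)) ^ (1 / γ)))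
    (hcone : (ρ / (‖gradient φ P‖ / (2 * Atil)) ^ (1 / γ)) ^ γ <
        2 * |⟪ν, ‖gradient φ P‖⁻¹ • gradient φ P⟫|) :
    (0 ≤ ⟪ν, ‖gradient φ P‖⁻¹ • gradient φ P⟫ → 0 < φ (P + ρ • ν)) ∧
    (⟪ν, ‖gradient φ P‖⁻¹ • gradient φ P⟫ ≤ 0 → φ (P + ρ • ν) < 0) := by
  simpa only [hP] using stmt11_general hA hγ.1 hρ.1 (fun x _ => hφ x) (fun x _ => hHolder x P)
    hgP hν hcone
end
end
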